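/- arXiv:2003.10523 — 2 statements merged into one kernel-verified Lean document; each statement's English description precedes it below -/
import Mathlib

section
/- Let P be a non-constant distribution supported in [-1,1], X ∈ [-1,1]^d with i.i.d. coordinates from P, C the (d,k)-multiplicities set, Σ = E[𝒳𝒳ᵀ] with 𝒳 = (X_α)_{α∈C}, and define the |C|×|C| matrices V with V_{α,β} = E[X_α T_β(X)] / E[X_β T_β(X)] and the diagonal matrix D with D_{α,α} = E[X_α T_α(X)]². Then: (1) Σ = V D Vᵀ; (2) λ_min(Σ) ≥ (min_{α∈C} E[X_α T_α(X)]²) · σ_min(V)²; (3) λ_max(Σ) ≤ (max_{α∈C} E[X_α T_α(X)]²) · σ_max(V)². -/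
open MeasureTheory Polynomial Matrix
open scoped Classical

noncomputable section

/-- One layer of a neural network: apply the weight matrix, then the activation
coordinatewise. -/
def applyLayer (σ : ℝ → ℝ) {m n : ℕ} (W : Matrix (Fin m) (Fin n) ℝ) (v : Fin n → ℝ) :
    Fin m → ℝ :=
  fun j => σ (∑ i, W j i * v i)

/-- Iterated application of `n` square hidden layers. -/
def iterLayers (σ : ℝ → ℝ) {m : ℕ} :
    (n : ℕ) → (Fin n → Matrix (Fin m) (Fin m) ℝ) → (Fin m → ℝ) → (Fin m → ℝ)
  | 0, _, v => v
  | n + 1, W, v => applyLayer σ (W (Fin.last n)) (iterLayers σ n (fun i => W i.castSucc) v)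

/-- Output of a neural network of depth `n+1` (one rectangular layer `W1` followed by
`n` square layers `Ws` and output weights `a`):
`f(W,x) = aᵀ σ(W_{n+1} σ( ⋯ σ(W_1 x) ⋯ ))`. -/
def nnFun (σ : ℝ → ℝ) {d m n : ℕ} (a : Fin m → ℝ)
    (W1 : Matrix (Fin m) (Fin d) ℝ) (Ws : Fin n → Matrix (Fin m) (Fin m) ℝ)
    (x : Fin d → ℝ) : ℝ :=
  ∑ j, a j * iterLayers σ n Ws (applyLayer σ W1 x) j

/-- The monomial `x_α = ∏ i, (x i) ^ (α i)`. -/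
def monom {d : ℕ} (α : Fin d → ℕ) (x : Fin d → ℝ) : ℝ := ∏ i, x i ^ α i

/-- Topological support of a measure on `ℝ`. -/
def measSupport (P : Measure ℝ) : Set ℝ := {x | ∀ U ∈ nhds x, P U ≠ 0}

/-- `ω(P,t) = min(|Support(P)| − 1, t)`, equal to `t` when the support is infinite. -/
def omegaP (P : Measure ℝ) (t : ℕ) : ℕ :=
  if (measSupport P).Finite then min ((measSupport P).ncard - 1) t else t

/-- `M' = min(M, d·(|Support(P)| − 1))`, equal to `M` when the support is infinite. -/
def capM (P : Measure ℝ) (d M : ℕ) : ℕ :=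
  if (measSupport P).Finite then min M (d * ((measSupport P).ncard - 1)) else M

/-- `F_{s,t}`: multi-indices `α ∈ ℕ^d` with all entries `≤ s` and total degree `t`. -/
def Fst (d s t : ℕ) : Finset (Fin d → ℕ) :=
  (Fintype.piFinset fun _ : Fin d => Finset.range (s + 1)).filter fun α => ∑ i, α i = t

/-- The `(d,M)`-multiplicities set `C = ∪_{t=0}^{M'} F_{ω(P,M),t}`. -/
def multSet (P : Measure ℝ) (d M : ℕ) : Finset (Fin d → ℕ) :=
  (Fintype.piFinset fun _ : Fin d => Finset.range (omegaP P M + 1)).filter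
    fun α => ∑ i, α i ≤ capM P d M

/-- `n`-th moment `c_n = E[X^n]` of `P`. -/
def momentP (P : Measure ℝ) (n : ℕ) : ℝ := ∫ x, x ^ n ∂P

/-- Hankel determinant `D_n = det((c_{i+j})_{0 ≤ i,j ≤ n})` of moments of `P`. -/
def Dn (P : Measure ℝ) (n : ℕ) : ℝ :=
  Matrix.det (Matrix.of fun i j : Fin (n + 1) => momentP P ((i : ℕ) + (j : ℕ)))

/-- `c(P,k) = min(min_{1 ≤ i ≤ ω(P,k)} (D_i/D_{i−1})^{k/2}, 1)`. -/
def cPk (P : Measure ℝ) (k : ℕ) : ℝ :=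
  sInf (insert (1 : ℝ)
    ((fun i => (Dn P i / Dn P (i - 1)) ^ ((k : ℝ) / 2)) '' Set.Icc 1 (omegaP P k)))

/-- `max(max_{1 ≤ i ≤ ω(P,k)} (D_i/D_{i−1})^{k/2}, 1)`. -/
def cPkMax (P : Measure ℝ) (k : ℕ) : ℝ :=
  sSup (insert (1 : ℝ)
    ((fun i => (Dn P i / Dn P (i - 1)) ^ ((k : ℝ) / 2)) '' Set.Icc 1 (omegaP P k)))

/-- `max(max_{1 ≤ i ≤ ω(P,k)} (D_i/D_{i−1})^k, 1)`. -/
def ratioMaxK (P : Measure ℝ) (k : ℕ) : ℝ :=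
  sSup (insert (1 : ℝ)
    ((fun i => (Dn P i / Dn P (i - 1)) ^ k) '' Set.Icc 1 (omegaP P k)))

/-- `min(min_{1 ≤ i ≤ ω(P,k)} (D_i/D_{i−1})^k, 1)`. -/
def ratioMinK (P : Measure ℝ) (k : ℕ) : ℝ :=
  sInf (insert (1 : ℝ)
    ((fun i => (Dn P i / Dn P (i - 1)) ^ k) '' Set.Icc 1 (omegaP P k)))

/-- `f(P,k) = max(c_{2ω(P,k)}^k, 1) · max(max_i (D_i/D_{i−1})^k, 1) / min(min_i (D_i/D_{i−1})^k, 1)`. -/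
def fPk (P : Measure ℝ) (k : ℕ) : ℝ :=
  max (momentP P (2 * omegaP P k) ^ k) 1 * ratioMaxK P k / ratioMinK P k

/-- `C(P,k) = f(P,k)/c(P,k)`. -/
def CPk (P : Measure ℝ) (k : ℕ) : ℝ := fPk P k / cPk P k

/-- An admissible distribution: a non-constant probability measure supported in `[-1,1]`. -/
def AdmissibleDist (P : Measure ℝ) : Prop :=
  IsProbabilityMeasure P ∧ P (Set.Icc (-1 : ℝ) 1) = 1 ∧ ∀ c : ℝ, P {c} < 1

/-- The product measure `P^{⊗d}` on `ℝ^d`. -/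
def piP (P : Measure ℝ) (d : ℕ) : Measure (Fin d → ℝ) := Measure.pi fun _ => P

/-- The joint law of `N` i.i.d. samples from `P^{⊗d}`. -/
def samples (P : Measure ℝ) (d N : ℕ) : Measure (Fin N → Fin d → ℝ) :=
  Measure.pi fun _ => piP P d

/-- Order of polynomial approximation of `σ` on `[-1,1]`: the least degree `r` for which
some real polynomial of degree `r` is uniformly within `ε` of `σ` on `[-1,1]`. -/
def approxOrder (σ : ℝ → ℝ) (ε : ℝ) : ℕ :=
  sInf {r : ℕ | ∃ p : Polynomial ℝ, p.natDegree = r ∧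
    ∀ x ∈ Set.Icc (-1 : ℝ) 1, |p.eval x - σ x| ≤ ε}

/-- An admissible activation function. -/
def AdmissibleActivation (σ : ℝ → ℝ) : Prop :=
  (∀ ε : ℝ, 0 < ε → ∃ p : Polynomial ℝ,
      ∀ x ∈ Set.Icc (-1 : ℝ) 1, |p.eval x - σ x| ≤ ε) ∧
  (∀ ε : ℝ, 0 < ε → ∃ p : Polynomial ℝ, p.natDegree = approxOrder σ ε ∧
      (∀ x ∈ Set.Icc (-1 : ℝ) 1, |p.eval x - σ x| ≤ ε) ∧
      ∀ x ∈ Set.Icc (-1 : ℝ) 1, p.eval x ∈ Set.Icc (0 : ℝ) 1) ∧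
  LipschitzOnWith 1 σ (Set.Icc (-1) 1) ∧
  ∀ x ∈ Set.Icc (-1 : ℝ) 1, |σ x| ≤ 1

/-- Quadratic form `vᵀ A v`. -/
def quadForm {n : Type*} [Fintype n] (A : Matrix n n ℝ) (v : n → ℝ) : ℝ :=
  ∑ i, ∑ j, v i * A i j * v j

/-- Smallest eigenvalue of a symmetric matrix (Rayleigh characterization). -/
def lamMin {n : Type*} [Fintype n] (A : Matrix n n ℝ) : ℝ :=
  sInf {r : ℝ | ∃ v : n → ℝ, ∑ i, v i ^ 2 = 1 ∧ r = quadForm A v}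

/-- Largest eigenvalue of a symmetric matrix (Rayleigh characterization). -/
def lamMax {n : Type*} [Fintype n] (A : Matrix n n ℝ) : ℝ :=
  sSup {r : ℝ | ∃ v : n → ℝ, ∑ i, v i ^ 2 = 1 ∧ r = quadForm A v}

/-- Smallest singular value. -/
def sigMin {n : Type*} [Fintype n] (A : Matrix n n ℝ) : ℝ :=
  Real.sqrt (lamMin (Aᵀ * A))

/-- Largest singular value. -/
def sigMax {n : Type*} [Fintype n] (A : Matrix n n ℝ) : ℝ :=
  Real.sqrt (lamMax (Aᵀ * A))

/-- The covariance matrix `Σ = E[𝒳 𝒳ᵀ]` of the monomials indexed by the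
`(d,k)`-multiplicities set, for input `X ∼ P^{⊗d}`. -/
def covMat (P : Measure ℝ) (d k : ℕ) :
    Matrix {α // α ∈ multSet P d k} {α // α ∈ multSet P d k} ℝ :=
  Matrix.of fun a b => ∫ x, monom a.1 x * monom b.1 x ∂(piP P d)


/-- `E[X_α T_β(X)]` for `X ∼ P^{⊗d}`. -/
def Ecoef (P : Measure ℝ) (T : ℕ → Polynomial ℝ) {d : ℕ} (α β : Fin d → ℕ) : ℝ :=
  ∫ x, monom α x * ∏ i, (T (β i)).eval (x i) ∂(piP P d)

/-- The matrix `V` with `V_{α,β} = E[X_α T_β(X)] / E[X_β T_β(X)]`. -/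
def Vmat (P : Measure ℝ) (T : ℕ → Polynomial ℝ) (d k : ℕ) :
    Matrix {α // α ∈ multSet P d k} {α // α ∈ multSet P d k} ℝ :=
  Matrix.of fun a b => Ecoef P T a.1 b.1 / Ecoef P T b.1 b.1

/-- The diagonal matrix `D` with `D_{α,α} = E[X_α T_α(X)]²`. -/
def Dmat (P : Measure ℝ) (T : ℕ → Polynomial ℝ) (d k : ℕ) :
    Matrix {α // α ∈ multSet P d k} {α // α ∈ multSet P d k} ℝ :=
  Matrix.of fun a b => if a = b then Ecoef P T a.1 a.1 ^ 2 else 0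

/-!
Let `τ` be the matrix of coefficients of the polynomials `T_β`, `β ∈ C`, in the monomials `X_α`.
Since `C` is a lower set, `T_β` involves only monomials indexed by `C`, and orthonormality of the
`T_β` reads `τᵀ Σ τ = 1`. Hence `A = Σ τ = (E[X_α T_β])` satisfies `Σ = A Aᵀ`, which is a Cholesky
factorisation: `Aᵀ = τ⁻¹` is triangular along with `τ`, so `A` has nonzero diagonal, and rescaling
its columns turns `A Aᵀ` into `V D Vᵀ`. For the eigenvalue bounds, Cauchy–Schwarz shows that `Vᵀ`,
like `V`, stretches lengths by at least the smallest and at most the largest singular value of `V`.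
-/

section QuadraticForms

variable {m n : Type*} [Fintype m] [Fintype n]

lemma quadForm_eq_dotProduct (A : Matrix n n ℝ) (v : n → ℝ) : quadForm A v = v ⬝ᵥ A *ᵥ v := by
  simp only [quadForm, dotProduct, mulVec, Finset.mul_sum, mul_assoc]

lemma quadForm_smul (A : Matrix n n ℝ) (c : ℝ) (v : n → ℝ) :
    quadForm A (c • v) = c ^ 2 * quadForm A v := by
  simp only [quadForm_eq_dotProduct, mulVec_smul, smul_dotProduct, dotProduct_smul, smul_eq_mul]
  ring

lemma quadForm_diagonal [DecidableEq n] (D v : n → ℝ) :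
    quadForm (diagonal D) v = ∑ i, D i * v i ^ 2 := by
  simp only [quadForm_eq_dotProduct, dotProduct, mulVec_diagonal]
  exact Finset.sum_congr rfl fun i _ => by ring

lemma quadForm_transpose_mul_mul (V : Matrix m n ℝ) (A : Matrix m m ℝ) (v : n → ℝ) :
    quadForm (Vᵀ * A * V) v = quadForm A (V *ᵥ v) := by
  simp only [quadForm_eq_dotProduct, ← mulVec_mulVec, dotProduct_mulVec v Vᵀ, vecMul_transpose]

lemma quadForm_transpose_mul_self (V : Matrix m n ℝ) (v : n → ℝ) :
    quadForm (Vᵀ * V) v = (V *ᵥ v) ⬝ᵥ (V *ᵥ v) := by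
  rw [quadForm_eq_dotProduct, ← mulVec_mulVec, dotProduct_mulVec, vecMul_transpose]

lemma dotProduct_self_eq_sum_sq (v : n → ℝ) : v ⬝ᵥ v = ∑ i, v i ^ 2 := by
  simp only [dotProduct, sq]

lemma zero_le_dotProduct_self (v : n → ℝ) : 0 ≤ v ⬝ᵥ v := by
  simpa using dotProduct_star_self_nonneg v

lemma dotProduct_sq_le (u v : n → ℝ) : (u ⬝ᵥ v) ^ 2 ≤ (u ⬝ᵥ u) * (v ⬝ᵥ v) := by
  simpa only [dotProduct, sq] using Finset.sum_mul_sq_le_sq_mul_sq Finset.univ u v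

end QuadraticForms

section Rayleigh

variable {n : Type*} [Fintype n]

lemma isBounded_setOf_quadForm_unit (A : Matrix n n ℝ) :
    Bornology.IsBounded {r : ℝ | ∃ v : n → ℝ, ∑ i, v i ^ 2 = 1 ∧ r = quadForm A v} := by
  refine isBounded_iff_forall_norm_le.2 ⟨∑ i, ∑ j, |A i j|, ?_⟩
  rintro _ ⟨v, hv, rfl⟩
  have hcoord (i : n) : |v i| ≤ 1 := by
    rw [← sq_le_one_iff_abs_le_one, ← hv]
    exact Finset.single_le_sum (fun j _ => sq_nonneg (v j)) (Finset.mem_univ i)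
  refine norm_sum_le_of_le _ fun i _ => norm_sum_le_of_le _ fun j _ => ?_
  calc ‖v i * A i j * v j‖ = |v i| * |A i j| * |v j| := by simp only [norm_mul, Real.norm_eq_abs]
    _ ≤ 1 * |A i j| * 1 := by gcongr <;> exact hcoord _
    _ = |A i j| := by ring

lemma exists_unit_quadForm_eq {v : n → ℝ} (hv : v ≠ 0) :
    ∃ u : n → ℝ, ∑ i, u i ^ 2 = 1 ∧
      ∀ A : Matrix n n ℝ, quadForm A v = quadForm A u * (v ⬝ᵥ v) := by
  have hpos : 0 < v ⬝ᵥ v :=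
    (zero_le_dotProduct_self v).lt_of_ne' (mt dotProduct_self_eq_zero.1 hv)
  refine ⟨(√(v ⬝ᵥ v))⁻¹ • v, ?_, fun A => ?_⟩
  · rw [← dotProduct_self_eq_sum_sq, smul_dotProduct, dotProduct_smul, smul_smul, ← sq, inv_pow,
      Real.sq_sqrt hpos.le, smul_eq_mul, inv_mul_cancel₀ hpos.ne']
  · rw [quadForm_smul, inv_pow, Real.sq_sqrt hpos.le, mul_right_comm, inv_mul_cancel₀ hpos.ne',
      one_mul]

lemma lamMin_mul_dotProduct_self_le_quadForm (A : Matrix n n ℝ) (v : n → ℝ) :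
    lamMin A * (v ⬝ᵥ v) ≤ quadForm A v := by
  rcases eq_or_ne v 0 with rfl | hv
  · simp [quadForm]
  · obtain ⟨u, hu, huv⟩ := exists_unit_quadForm_eq hv
    rw [huv]
    exact mul_le_mul_of_nonneg_right
      (csInf_le (isBounded_setOf_quadForm_unit A).bddBelow ⟨u, hu, rfl⟩)
      (zero_le_dotProduct_self v)

lemma quadForm_le_lamMax_mul_dotProduct_self (A : Matrix n n ℝ) (v : n → ℝ) :
    quadForm A v ≤ lamMax A * (v ⬝ᵥ v) := by
  rcases eq_or_ne v 0 with rfl | hv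
  · simp [quadForm]
  · obtain ⟨u, hu, huv⟩ := exists_unit_quadForm_eq hv
    rw [huv]
    exact mul_le_mul_of_nonneg_right
      (le_csSup (isBounded_setOf_quadForm_unit A).bddAbove ⟨u, hu, rfl⟩)
      (zero_le_dotProduct_self v)

lemma setOf_quadForm_unit_nonempty [Nonempty n] (A : Matrix n n ℝ) :
    {r : ℝ | ∃ v : n → ℝ, ∑ i, v i ^ 2 = 1 ∧ r = quadForm A v}.Nonempty := by
  obtain ⟨i⟩ := ‹Nonempty n›
  exact ⟨_, Pi.single i 1, by rw [← dotProduct_self_eq_sum_sq, single_dotProduct]; simp, rfl⟩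

lemma le_lamMin [Nonempty n] {A : Matrix n n ℝ} {c : ℝ}
    (h : ∀ v : n → ℝ, c * (v ⬝ᵥ v) ≤ quadForm A v) : c ≤ lamMin A := by
  refine le_csInf (setOf_quadForm_unit_nonempty A) ?_
  rintro _ ⟨v, hv, rfl⟩
  simpa [dotProduct_self_eq_sum_sq, hv] using h v

lemma lamMax_le [Nonempty n] {A : Matrix n n ℝ} {c : ℝ}
    (h : ∀ v : n → ℝ, quadForm A v ≤ c * (v ⬝ᵥ v)) : lamMax A ≤ c := by
  refine csSup_le (setOf_quadForm_unit_nonempty A) ?_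
  rintro _ ⟨v, hv, rfl⟩
  simpa [dotProduct_self_eq_sum_sq, hv] using h v

lemma sigMin_sq (V : Matrix n n ℝ) : sigMin V ^ 2 = lamMin (Vᵀ * V) := by
  refine Real.sq_sqrt (Real.sInf_nonneg ?_)
  rintro _ ⟨v, -, rfl⟩
  exact quadForm_transpose_mul_self V v ▸ zero_le_dotProduct_self _

lemma sigMax_sq (V : Matrix n n ℝ) : sigMax V ^ 2 = lamMax (Vᵀ * V) := by
  refine Real.sq_sqrt (Real.sSup_nonneg ?_)
  rintro _ ⟨v, -, rfl⟩
  exact quadForm_transpose_mul_self V v ▸ zero_le_dotProduct_self _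

end Rayleigh

section SingularValues

variable {m n : Type*} [Fintype m] [Fintype n]

lemma transpose_mulVec_dotProduct_self_le {V : Matrix m n ℝ} {c : ℝ} (hc : 0 ≤ c)
    (hV : ∀ u, (V *ᵥ u) ⬝ᵥ (V *ᵥ u) ≤ c * (u ⬝ᵥ u)) (v : m → ℝ) :
    (Vᵀ *ᵥ v) ⬝ᵥ (Vᵀ *ᵥ v) ≤ c * (v ⬝ᵥ v) := by
  set w := Vᵀ *ᵥ v with hw
  rcases (zero_le_dotProduct_self w).eq_or_lt with h0 | hpos
  · exact h0 ▸ mul_nonneg hc (zero_le_dotProduct_self v)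
  · refine le_of_mul_le_mul_right ?_ hpos
    calc (w ⬝ᵥ w) * (w ⬝ᵥ w) = (v ⬝ᵥ V *ᵥ w) ^ 2 := by
          rw [← dotProduct_transpose_mulVec V, ← hw, sq]
      _ ≤ (v ⬝ᵥ v) * ((V *ᵥ w) ⬝ᵥ (V *ᵥ w)) := dotProduct_sq_le _ _
      _ ≤ (v ⬝ᵥ v) * (c * (w ⬝ᵥ w)) :=
          mul_le_mul_of_nonneg_left (hV w) (zero_le_dotProduct_self v)
      _ = c * (v ⬝ᵥ v) * (w ⬝ᵥ w) := by ring

lemma mulVec_surjective_of_forall_mul_dotProduct_self_le {V : Matrix n n ℝ} {c : ℝ} (hc : 0 < c)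
    (hV : ∀ u, c * (u ⬝ᵥ u) ≤ (V *ᵥ u) ⬝ᵥ (V *ᵥ u)) : Function.Surjective V.mulVec := by
  suffices hinj : Function.Injective V.mulVecLin from LinearMap.injective_iff_surjective.1 hinj
  refine (injective_iff_map_eq_zero _).2 fun u hu => ?_
  have hle : c * (u ⬝ᵥ u) ≤ c * 0 := by simpa [show V *ᵥ u = 0 from hu] using hV u
  exact dotProduct_self_eq_zero.1
    (le_antisymm (le_of_mul_le_mul_left hle hc) (zero_le_dotProduct_self u))

lemma mul_dotProduct_self_le_transpose_mulVec {V : Matrix n n ℝ} {c : ℝ}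
    (hV : ∀ u, c * (u ⬝ᵥ u) ≤ (V *ᵥ u) ⬝ᵥ (V *ᵥ u)) (v : n → ℝ) :
    c * (v ⬝ᵥ v) ≤ (Vᵀ *ᵥ v) ⬝ᵥ (Vᵀ *ᵥ v) := by
  have hw := zero_le_dotProduct_self (Vᵀ *ᵥ v)
  have hv := zero_le_dotProduct_self v
  rcases le_or_gt c 0 with hc | hc
  · exact (mul_nonpos_of_nonpos_of_nonneg hc hv).trans hw
  obtain ⟨u, rfl⟩ := mulVec_surjective_of_forall_mul_dotProduct_self_le hc hV v
  set v := V *ᵥ u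
  rcases hv.eq_or_lt with h0 | hpos
  · rwa [← h0, mul_zero]
  · refine le_of_mul_le_mul_right ?_ hpos
    calc c * (v ⬝ᵥ v) * (v ⬝ᵥ v) = c * (u ⬝ᵥ Vᵀ *ᵥ v) ^ 2 := by
          rw [dotProduct_transpose_mulVec]; ring
      _ ≤ c * ((u ⬝ᵥ u) * ((Vᵀ *ᵥ v) ⬝ᵥ (Vᵀ *ᵥ v))) :=
          mul_le_mul_of_nonneg_left (dotProduct_sq_le _ _) hc.le
      _ = ((Vᵀ *ᵥ v) ⬝ᵥ (Vᵀ *ᵥ v)) * (c * (u ⬝ᵥ u)) := by ring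
      _ ≤ ((Vᵀ *ᵥ v) ⬝ᵥ (Vᵀ *ᵥ v)) * (v ⬝ᵥ v) := mul_le_mul_of_nonneg_left (hV u) hw

lemma sigMin_sq_mul_le_transpose_mulVec (V : Matrix n n ℝ) (v : n → ℝ) :
    sigMin V ^ 2 * (v ⬝ᵥ v) ≤ (Vᵀ *ᵥ v) ⬝ᵥ (Vᵀ *ᵥ v) := by
  refine mul_dotProduct_self_le_transpose_mulVec (fun u => ?_) v
  rw [sigMin_sq, ← quadForm_transpose_mul_self]
  exact lamMin_mul_dotProduct_self_le_quadForm _ u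

lemma transpose_mulVec_le_sigMax_sq_mul (V : Matrix n n ℝ) (v : n → ℝ) :
    (Vᵀ *ᵥ v) ⬝ᵥ (Vᵀ *ᵥ v) ≤ sigMax V ^ 2 * (v ⬝ᵥ v) := by
  refine transpose_mulVec_dotProduct_self_le (sq_nonneg _) (fun u => ?_) v
  rw [sigMax_sq, ← quadForm_transpose_mul_self]
  exact quadForm_le_lamMax_mul_dotProduct_self _ u

variable [DecidableEq n]

lemma quadForm_mul_diagonal_mul_transpose (V : Matrix m n ℝ) (D : n → ℝ) (v : m → ℝ) :
    quadForm (V * diagonal D * Vᵀ) v = ∑ i, D i * (Vᵀ *ᵥ v) i ^ 2 := by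
  simpa only [transpose_transpose, quadForm_diagonal] using
    quadForm_transpose_mul_mul Vᵀ (diagonal D) v

theorem iInf_mul_sigMin_sq_le_lamMin [Nonempty n] (V : Matrix n n ℝ) {D : n → ℝ} (hD : 0 ≤ D) :
    (⨅ i, D i) * sigMin V ^ 2 ≤ lamMin (V * diagonal D * Vᵀ) := by
  refine le_lamMin fun v => ?_
  calc (⨅ i, D i) * sigMin V ^ 2 * (v ⬝ᵥ v)
      ≤ (⨅ i, D i) * ((Vᵀ *ᵥ v) ⬝ᵥ (Vᵀ *ᵥ v)) := by
        rw [mul_assoc]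
        exact mul_le_mul_of_nonneg_left (sigMin_sq_mul_le_transpose_mulVec V v)
          (Real.iInf_nonneg hD)
    _ ≤ ∑ i, D i * (Vᵀ *ᵥ v) i ^ 2 := by
        rw [dotProduct_self_eq_sum_sq, Finset.mul_sum]
        gcongr with i
        exact ciInf_le (Set.finite_range D).bddBelow i
    _ = quadForm (V * diagonal D * Vᵀ) v := (quadForm_mul_diagonal_mul_transpose V D v).symm

theorem lamMax_le_iSup_mul_sigMax_sq [Nonempty n] (V : Matrix n n ℝ) {D : n → ℝ} (hD : 0 ≤ D) :
    lamMax (V * diagonal D * Vᵀ) ≤ (⨆ i, D i) * sigMax V ^ 2 := by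
  refine lamMax_le fun v => ?_
  calc quadForm (V * diagonal D * Vᵀ) v
      = ∑ i, D i * (Vᵀ *ᵥ v) i ^ 2 := quadForm_mul_diagonal_mul_transpose V D v
    _ ≤ (⨆ i, D i) * ((Vᵀ *ᵥ v) ⬝ᵥ (Vᵀ *ᵥ v)) := by
        rw [dotProduct_self_eq_sum_sq, Finset.mul_sum]
        gcongr with i
        exact le_ciSup (Set.finite_range D).bddAbove i
    _ ≤ (⨆ i, D i) * sigMax V ^ 2 * (v ⬝ᵥ v) := by
        rw [mul_assoc]
        exact mul_le_mul_of_nonneg_left (transpose_mulVec_le_sigMax_sq_mul V v)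
          (Real.iSup_nonneg hD)

end SingularValues

section Cholesky

variable {n R : Type*} [Fintype n]

lemma mul_apply_self_of_blockTriangular {α : Type*} [NonUnitalNonAssocSemiring R] [LinearOrder α]
    {b : n → α} (hb : Function.Injective b) {M N : Matrix n n R} (hM : M.BlockTriangular b)
    (hN : N.BlockTriangular b) (i : n) : (M * N) i i = M i i * N i i := by
  rw [mul_apply, Fintype.sum_eq_single i]
  intro j hj
  rcases (hb.ne hj).lt_or_gt with hlt | hgt
  · rw [hM hlt, zero_mul]
  · rw [hN hgt, mul_zero]

variable [DecidableEq n]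

lemma eq_mul_transpose_of_transpose_mul_mul_eq_one [CommRing R] {G τ : Matrix n n R}
    (hG : G.IsSymm) (h : τᵀ * G * τ = 1) : G = (G * τ) * (G * τ)ᵀ := by
  have hinv : τ * (τᵀ * G) = 1 := mul_eq_one_comm.1 h
  rw [transpose_mul, hG.eq, mul_assoc, hinv, mul_one]

lemma mul_apply_self_ne_zero_of_transpose_mul_mul_eq_one {α : Type*} [CommRing R] [Nontrivial R]
    [LinearOrder α] {b : n → α} (hb : Function.Injective b) {G τ : Matrix n n R} (hG : G.IsSymm)
    (hτ : τ.BlockTriangular b) (h : τᵀ * G * τ = 1) (i : n) : (G * τ) i i ≠ 0 := by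
  have htri : (τᵀ * G).BlockTriangular b := by
    let := invertibleOfLeftInverse τ _ h
    rw [← inv_eq_left_inv h]
    exact blockTriangular_inv_of_blockTriangular hτ
  have hdiag : (τᵀ * G) i i * τ i i = 1 := by
    rw [← mul_apply_self_of_blockTriangular hb htri hτ, h, one_apply_eq]
  have htranspose : (G * τ) i i = (τᵀ * G) i i := by
    rw [← transpose_apply (G * τ), transpose_mul, hG.eq]
  exact htranspose ▸ left_ne_zero_of_mul_eq_one hdiag

lemma mul_transpose_eq_of_div_diag [Field R] {A : Matrix n n R} (hA : ∀ i, A i i ≠ 0) :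
    A * Aᵀ = (of fun i j => A i j / A j j) * diagonal (fun i => A i i ^ 2) *
      (of fun i j => A i j / A j j)ᵀ := by
  ext i j
  rw [mul_apply, mul_apply]
  simp only [mul_diagonal, transpose_apply, of_apply]
  exact Finset.sum_congr rfl fun l _ => by have := hA l; field_simp

end Cholesky

section SecondMoments

variable {Ω ι κ : Type*} [MeasurableSpace Ω] [Fintype ι] {μ : Measure Ω} {f : ι → Ω → ℝ}

/-- The matrix `(∫ fᵢ fⱼ dμ)` of second moments of a family of real functions. -/
def secondMoment {ι : Type*} (μ : Measure Ω) (f : ι → Ω → ℝ) : Matrix ι ι ℝ :=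
  of fun i j => ∫ ω, f i ω * f j ω ∂μ

lemma secondMoment_isSymm {ι : Type*} (μ : Measure Ω) (f : ι → Ω → ℝ) :
    (secondMoment μ f).IsSymm := by
  ext i j
  simp only [secondMoment, transpose_apply, of_apply, mul_comm]

lemma integrable_mul_sum (hf : ∀ i j, Integrable (fun ω => f i ω * f j ω) μ) (i : ι) (c : ι → ℝ) :
    Integrable (fun ω => f i ω * ∑ l, c l * f l ω) μ := by
  simp only [Finset.mul_sum, mul_left_comm (f i _)]
  exact integrable_finsetSum _ fun l _ => (hf i l).const_mul _

lemma integral_mul_sum_eq_secondMoment_mul (hf : ∀ i j, Integrable (fun ω => f i ω * f j ω) μ)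
    (τ : Matrix ι κ ℝ) (i : ι) (j : κ) :
    ∫ ω, f i ω * ∑ l, τ l j * f l ω ∂μ = (secondMoment μ f * τ) i j := by
  simp only [Finset.mul_sum, mul_left_comm (f i _), mul_apply, secondMoment, of_apply]
  rw [integral_finsetSum _ fun l _ => (hf i l).const_mul _]
  exact Finset.sum_congr rfl fun l _ => by rw [integral_const_mul, mul_comm]

lemma secondMoment_linearCombination (hf : ∀ i j, Integrable (fun ω => f i ω * f j ω) μ)
    (τ : Matrix ι κ ℝ) :
    secondMoment μ (fun j ω => ∑ l, τ l j * f l ω) = τᵀ * secondMoment μ f * τ := by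
  ext i j
  rw [Matrix.mul_assoc, mul_apply]
  change ∫ ω, (∑ l, τ l i * f l ω) * ∑ l, τ l j * f l ω ∂μ = _
  simp only [Finset.sum_mul, mul_assoc]
  rw [integral_finsetSum _ fun l _ => (integrable_mul_sum hf l fun l => τ l j).const_mul _]
  simp only [integral_const_mul, integral_mul_sum_eq_secondMoment_mul hf, transpose_apply]

end SecondMoments

section TensorPolynomials

variable {d : ℕ} {T : ℕ → ℝ[X]} {P : Measure ℝ}

/-- The value at `x` of the tensor polynomial `T_β = ∏ᵢ T_{βᵢ}(Xᵢ)`. -/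
def tensorPoly (T : ℕ → ℝ[X]) (β : Fin d → ℕ) (x : Fin d → ℝ) : ℝ := ∏ i, (T (β i)).eval (x i)

/-- The coefficient of the monomial `X_γ` in the tensor polynomial `T_β`. -/
def tensorCoeff (T : ℕ → ℝ[X]) (β γ : Fin d → ℕ) : ℝ := ∏ i, (T (β i)).coeff (γ i)

lemma tensorCoeff_eq_zero {β γ : Fin d → ℕ} (hdeg : ∀ i, (T (β i)).natDegree ≤ β i)
    (h : ¬ γ ≤ β) : tensorCoeff T β γ = 0 := by
  obtain ⟨i, hi⟩ := not_forall.1 h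
  exact Finset.prod_eq_zero (Finset.mem_univ i)
    (coeff_eq_zero_of_natDegree_lt ((hdeg i).trans_lt (not_le.1 hi)))

lemma tensorPoly_eq_sum {S : Finset (Fin d → ℕ)} (hS : IsLowerSet (S : Set (Fin d → ℕ)))
    {β : Fin d → ℕ} (hβ : β ∈ S) (hdeg : ∀ i, (T (β i)).natDegree ≤ β i) (x : Fin d → ℝ) :
    tensorPoly T β x = ∑ γ ∈ S, tensorCoeff T β γ * monom γ x := by
  have hmem (γ : Fin d → ℕ) :
      γ ∈ Fintype.piFinset (fun i => Finset.range (β i + 1)) ↔ γ ≤ β := by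
    simp only [Fintype.mem_piFinset, Finset.mem_range, Nat.lt_succ_iff, Pi.le_def]
  simp only [tensorPoly, eval_eq_sum_range' (Nat.lt_succ_of_le (hdeg _))]
  rw [Finset.prod_univ_sum]
  simp only [Finset.prod_mul_distrib]
  refine Finset.sum_subset (fun γ hγ => hS ((hmem γ).1 hγ) hβ) fun γ _ hγ => ?_
  exact mul_eq_zero_of_left (tensorCoeff_eq_zero hdeg (mt (hmem γ).2 hγ)) _

lemma monom_mul_monom (α β : Fin d → ℕ) (x : Fin d → ℝ) :
    monom α x * monom β x = monom (α + β) x := by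
  simp only [monom, ← Finset.prod_mul_distrib, Pi.add_apply, pow_add]

lemma integrable_monom [SigmaFinite P] {α : Fin d → ℕ}
    (h : ∀ i, Integrable (fun x => x ^ α i) P) : Integrable (monom α) (piP P d) :=
  Integrable.fintype_prod h

lemma integral_tensorPoly_mul_tensorPoly [SigmaFinite P] {w : ℕ}
    (horth : ∀ i ≤ w, ∀ j ≤ w, ∫ x, (T i).eval x * (T j).eval x ∂P = if i = j then 1 else 0)
    {α β : Fin d → ℕ} (hα : ∀ i, α i ≤ w) (hβ : ∀ i, β i ≤ w) :
    ∫ x, tensorPoly T α x * tensorPoly T β x ∂(piP P d) = if α = β then 1 else 0 := by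
  simp only [tensorPoly, ← Finset.prod_mul_distrib, piP]
  rw [integral_fintype_prod_eq_prod (fun i x => (T (α i)).eval x * (T (β i)).eval x)]
  simp only [horth _ (hα _) _ (hβ _), Finset.prod_ite_zero, Finset.prod_const_one, Finset.mem_univ,
    true_imp_iff, funext_iff]

/-- The change-of-basis matrix from tensor polynomials to monomials indexed by `S`: its column `β`
lists the coefficients of `T_β`. -/
def tensorCoeffMatrix (T : ℕ → ℝ[X]) (S : Finset (Fin d → ℕ)) : Matrix S S ℝ :=
  of fun γ β => tensorCoeff T β.1 γ.1

-- The product order on multi-indices already makes the matrix triangular; the lexicographic order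
-- is a linear extension of it, as needed for inverses of triangular matrices.
lemma blockTriangular_tensorCoeffMatrix {S : Finset (Fin d → ℕ)}
    (hdeg : ∀ β ∈ S, ∀ i, (T (β i)).natDegree ≤ β i) :
    (tensorCoeffMatrix T S).BlockTriangular fun β => toLex β.1 :=
  fun _ β hlt => tensorCoeff_eq_zero (hdeg β.1 β.2) fun hle =>
    (Pi.toLex_monotone hle).not_gt hlt

end TensorPolynomials

section MultiplicitiesSet

variable {P : Measure ℝ} {d k : ℕ}

lemma mem_multSet {α : Fin d → ℕ} :
    α ∈ multSet P d k ↔ (∀ i, α i ≤ omegaP P k) ∧ ∑ i, α i ≤ capM P d k := by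
  simp only [multSet, Finset.mem_filter, Fintype.mem_piFinset, Finset.mem_range, Nat.lt_succ_iff]

lemma isLowerSet_multSet : IsLowerSet (multSet P d k : Set (Fin d → ℕ)) := by
  intro β α hle hβ
  obtain ⟨hentry, hsum⟩ := mem_multSet.1 hβ
  exact mem_multSet.2 ⟨fun i => (hle i).trans (hentry i),
    (Finset.sum_le_sum fun i _ => hle i).trans hsum⟩

instance nonempty_multSet : Nonempty {α // α ∈ multSet P d k} :=
  ⟨0, mem_multSet.2 (by simp)⟩

end MultiplicitiesSet

section Covariance

variable {P : Measure ℝ} {d k : ℕ} {T : ℕ → ℝ[X]}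

lemma integrable_monom_mul_monom_of_mem_multSet [SigmaFinite P]
    (hmom : ∀ n ≤ 2 * omegaP P k, Integrable (fun x => x ^ n) P)
    (a b : {α : Fin d → ℕ // α ∈ multSet P d k}) :
    Integrable (fun x => monom a.1 x * monom b.1 x) (piP P d) := by
  simp only [monom_mul_monom]
  refine integrable_monom fun i => hmom _ ?_
  have ha := (mem_multSet.1 a.2).1 i
  have hb := (mem_multSet.1 b.2).1 i
  simp only [Pi.add_apply]
  omega

lemma tensorPoly_eq_sum_multSet (hdeg : ∀ i ≤ omegaP P k, (T i).natDegree ≤ i)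
    (b : {α : Fin d → ℕ // α ∈ multSet P d k}) (x : Fin d → ℝ) :
    tensorPoly T b.1 x = ∑ c, tensorCoeffMatrix T (multSet P d k) c b * monom c.1 x := by
  rw [tensorPoly_eq_sum isLowerSet_multSet b.2 fun i => hdeg _ ((mem_multSet.1 b.2).1 i),
    ← Finset.sum_coe_sort]
  rfl

lemma Ecoef_eq_covMat_mul [SigmaFinite P]
    (hmom : ∀ n ≤ 2 * omegaP P k, Integrable (fun x => x ^ n) P)
    (hdeg : ∀ i ≤ omegaP P k, (T i).natDegree ≤ i)
    (a b : {α : Fin d → ℕ // α ∈ multSet P d k}) :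
    Ecoef P T a.1 b.1 = (covMat P d k * tensorCoeffMatrix T (multSet P d k)) a b := by
  refine Eq.trans ?_ (integral_mul_sum_eq_secondMoment_mul
    (integrable_monom_mul_monom_of_mem_multSet hmom) (tensorCoeffMatrix T _) a b)
  simp only [← tensorPoly_eq_sum_multSet hdeg]
  rfl

lemma transpose_mul_covMat_mul_eq_one [SigmaFinite P]
    (hmom : ∀ n ≤ 2 * omegaP P k, Integrable (fun x => x ^ n) P)
    (hdeg : ∀ i ≤ omegaP P k, (T i).natDegree ≤ i)
    (horth : ∀ i ≤ omegaP P k, ∀ j ≤ omegaP P k,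
      ∫ x, (T i).eval x * (T j).eval x ∂P = if i = j then 1 else 0) :
    (tensorCoeffMatrix T (multSet P d k))ᵀ * covMat P d k * tensorCoeffMatrix T (multSet P d k)
      = 1 := by
  refine (secondMoment_linearCombination
    (integrable_monom_mul_monom_of_mem_multSet hmom) (tensorCoeffMatrix T _)).symm.trans ?_
  simp only [← tensorPoly_eq_sum_multSet hdeg]
  ext a b
  rw [secondMoment, of_apply, integral_tensorPoly_mul_tensorPoly horth (mem_multSet.1 a.2).1
    (mem_multSet.1 b.2).1, one_apply]
  simp only [Subtype.ext_iff]

lemma Dmat_eq_diagonal : Dmat P T d k = diagonal fun a => Ecoef P T a.1 a.1 ^ 2 := by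
  ext a b
  simp only [Dmat, of_apply, diagonal_apply]

theorem covMat_eq_Vmat_mul_Dmat_mul_transpose [SigmaFinite P]
    (hmom : ∀ n ≤ 2 * omegaP P k, Integrable (fun x => x ^ n) P)
    (hdeg : ∀ i ≤ omegaP P k, (T i).natDegree ≤ i)
    (horth : ∀ i ≤ omegaP P k, ∀ j ≤ omegaP P k,
      ∫ x, (T i).eval x * (T j).eval x ∂P = if i = j then 1 else 0) :
    covMat P d k = Vmat P T d k * Dmat P T d k * (Vmat P T d k)ᵀ := by
  have hsymm : (covMat P d k).IsSymm :=
    secondMoment_isSymm (piP P d) fun a : {α // α ∈ multSet P d k} => monom a.1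
  have hone := transpose_mul_covMat_mul_eq_one (d := d) hmom hdeg horth
  have htri : (tensorCoeffMatrix T (multSet P d k)).BlockTriangular fun β => toLex β.1 :=
    blockTriangular_tensorCoeffMatrix fun β hβ i => hdeg _ ((mem_multSet.1 hβ).1 i)
  have hdiag := mul_apply_self_ne_zero_of_transpose_mul_mul_eq_one
    (toLex.injective.comp Subtype.val_injective) hsymm htri hone
  rw [Dmat_eq_diagonal, Vmat]
  simp only [Ecoef_eq_covMat_mul hmom hdeg]
  rw [← mul_transpose_eq_of_div_diag hdiag]
  exact eq_mul_transpose_of_transpose_mul_mul_eq_one hsymm hone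

lemma AdmissibleDist.integrable_pow (hP : AdmissibleDist P) (n : ℕ) :
    Integrable (fun x => x ^ n) P := by
  have := hP.1
  have hsupp : P.restrict (Set.Icc (-1 : ℝ) 1) = P :=
    Measure.restrict_eq_self_of_ae_mem ((mem_ae_iff_prob_eq_one measurableSet_Icc).2 hP.2.1)
  rw [← hsupp]
  exact (continuous_pow n).continuousOn.integrableOn_compact isCompact_Icc

theorem covariance_decomposition_general
    (P : Measure ℝ) (d k : ℕ) (T : ℕ → ℝ[X])
    (hmom : ∀ n ≤ 2 * omegaP P k, Integrable (fun x => x ^ n) P)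
    (hdeg : ∀ i ≤ omegaP P k, (T i).natDegree ≤ i)
    (horth : ∀ i ≤ omegaP P k, ∀ j ≤ omegaP P k,
      ∫ x, (T i).eval x * (T j).eval x ∂P = if i = j then 1 else 0) :
    covMat P d k = Vmat P T d k * Dmat P T d k * (Vmat P T d k)ᵀ ∧
    sInf {r : ℝ | ∃ a : {α // α ∈ multSet P d k}, r = Ecoef P T a.1 a.1 ^ 2}
        * sigMin (Vmat P T d k) ^ 2
      ≤ lamMin (covMat P d k) ∧
    lamMax (covMat P d k)
      ≤ sSup {r : ℝ | ∃ a : {α // α ∈ multSet P d k}, r = Ecoef P T a.1 a.1 ^ 2}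
          * sigMax (Vmat P T d k) ^ 2 := by
  have : IsFiniteMeasure P :=
    (integrable_const_iff_isFiniteMeasure one_ne_zero).1 (by simpa using hmom 0 (Nat.zero_le _))
  have hdecomp := covMat_eq_Vmat_mul_Dmat_mul_transpose (d := d) hmom hdeg horth
  have hrange : {r : ℝ | ∃ a : {α // α ∈ multSet P d k}, r = Ecoef P T a.1 a.1 ^ 2} =
      Set.range fun a : {α // α ∈ multSet P d k} => Ecoef P T a.1 a.1 ^ 2 :=
    Set.ext fun r => exists_congr fun a => eq_comm
  refine ⟨hdecomp, ?_⟩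
  rw [hdecomp, Dmat_eq_diagonal, hrange]
  exact ⟨iInf_mul_sigMin_sq_le_lamMin _ fun a => sq_nonneg _,
    lamMax_le_iSup_mul_sigMax_sq _ fun a => sq_nonneg _⟩

end Covariance

/-- Decomposition `Σ = V D Vᵀ` and the resulting extreme eigenvalue
bounds `λ_min(Σ) ≥ (min_α E[X_α T_α]²) σ_min(V)²`,
`λ_max(Σ) ≤ (max_α E[X_α T_α]²) σ_max(V)²`. -/
theorem covariance_decomposition
    (P : Measure ℝ) (hP : AdmissibleDist P) (d k : ℕ)
    (T : ℕ → Polynomial ℝ)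
    (hdeg : ∀ i ≤ omegaP P k, (T i).natDegree = i)
    (hlead : ∀ i ≤ omegaP P k, 0 < (T i).leadingCoeff)
    (horth : ∀ i ≤ omegaP P k, ∀ j ≤ omegaP P k,
      ∫ x, (T i).eval x * (T j).eval x ∂P = if i = j then 1 else 0) :
    covMat P d k = Vmat P T d k * Dmat P T d k * (Vmat P T d k)ᵀ ∧
    sInf {r : ℝ | ∃ a : {α // α ∈ multSet P d k}, r = Ecoef P T a.1 a.1 ^ 2}
        * sigMin (Vmat P T d k) ^ 2
      ≤ lamMin (covMat P d k) ∧
    lamMax (covMat P d k)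
      ≤ sSup {r : ℝ | ∃ a : {α // α ∈ multSet P d k}, r = Ecoef P T a.1 a.1 ^ 2}
          * sigMax (Vmat P T d k) ^ 2 :=
  covariance_decomposition_general P d k T (fun n _ => hP.integrable_pow n)
    (fun i hi => (hdeg i hi).le) horth

end
end

section
/- Let X ∈ ℝ^d have an admissible distribution P^⊗d, let σ be an admissible activation with order of approximation φ_σ, and let f(W*, X) be computed by an L-layer neural network with activation σ whose weights satisfy ‖a*‖_{ℓ1} ≤ 1 and ‖W*_{p,j}‖_{ℓ1} ≤ 1 for every p ∈ [L] and every row j. Fix ε > 0, set M = (φ_σ(√(ε/L²)))^L ∈ ℕ, and let C be the (d,M)-multiplicities set. Then there exist coefficients (q*_α)_{α∈C} ∈ ℝ^{|C|} such that the polynomial P(X) = Σ_{α∈C} q*_α X_α satisfies both (a) E[X_α (f(W*, X) − P(X))] = 0 for every α ∈ C, and (b) E[(f(W*, X) − P(X))²] ≤ ε. -/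
open MeasureTheory Polynomial Matrix
open scoped Classical

noncomputable section

/-! Feeding the polynomial that approximates the activation through the network instead of the
activation itself gives a polynomial of degree `r ^ L`. Since the weights have `ℓ¹` norm at most
`1` and the activation is `1`-Lipschitz on `[-1, 1]`, each layer adds at most one approximation
error `δ` to the uniform error, provided the intermediate polynomials also stay in `[-1, 1]`. On a
finite support of `n` points every power of a coordinate agrees with a polynomial of degree `< n`,
so this polynomial is almost surely a combination of the monomials of the multiplicities set. The
`L²` projection of the network onto their span has the required orthogonality, and it is at least
as close to the network as the polynomial just constructed. -/

/-! ### Orthogonal projection onto finitely many vectors -/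

theorem exists_inner_sub_sum_eq_zero_and_norm_le {𝕜 E ι : Type*} [RCLike 𝕜]
    [NormedAddCommGroup E] [InnerProductSpace 𝕜 E] (C : Finset ι) (v : ι → E) (y : E) :
    ∃ q : ι → 𝕜, (∀ α ∈ C, inner 𝕜 (v α) (y - ∑ β ∈ C, q β • v β) = 0) ∧
      ∀ c : ι → 𝕜, ‖y - ∑ β ∈ C, q β • v β‖ ≤ ‖y - ∑ β ∈ C, c β • v β‖ := by
  let S : Submodule 𝕜 E := Submodule.span 𝕜 (v '' C)
  have v_mem {α : ι} (hα : α ∈ C) : v α ∈ S := Submodule.subset_span ⟨α, hα, rfl⟩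
  have : FiniteDimensional 𝕜 S := FiniteDimensional.span_of_finite 𝕜 (C.finite_toSet.image _)
  obtain ⟨q, hq⟩ := (Submodule.mem_span_image_finset_iff_exists_fun' 𝕜).1
    (S.starProjection_apply_mem y)
  refine ⟨q, fun α hα => ?_, fun c => ?_⟩ <;> rw [hq]
  · exact Submodule.inner_right_of_mem_orthogonal (v_mem hα)
      (S.sub_starProjection_mem_orthogonal y)
  · have sum_mem : ∑ β ∈ C, c β • v β ∈ S :=
      S.sum_mem fun β hβ => S.smul_mem _ (v_mem hβ)
    rw [S.starProjection_minimal]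
    exact ciInf_le ⟨0, Set.forall_mem_range.2 fun _ => norm_nonneg _⟩ (⟨_, sum_mem⟩ : S)

section L2

variable {Ω ι : Type*} [MeasurableSpace Ω] {μ : Measure Ω} {f g : Ω → ℝ}

theorem inner_toLp_toLp (hf : MemLp f 2 μ) (hg : MemLp g 2 μ) :
    inner ℝ (hf.toLp f) (hg.toLp g) = ∫ x, f x * g x ∂μ := by
  rw [L2.inner_def]
  refine integral_congr_ae ?_
  filter_upwards [hf.coeFn_toLp, hg.coeFn_toLp] with x hfx hgx
  rw [hfx, hgx, Real.inner_apply]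

theorem norm_toLp_sq (hf : MemLp f 2 μ) : ‖hf.toLp f‖ ^ 2 = ∫ x, f x ^ 2 ∂μ := by
  rw [← real_inner_self_eq_norm_sq, inner_toLp_toLp]
  simp only [sq]

section LinearCombination

variable {p : ENNReal} {φ : ι → Ω → ℝ}

theorem memLp_sum_mul (hφ : ∀ β, MemLp (φ β) p μ) (C : Finset ι) (c : ι → ℝ) :
    MemLp (fun x => ∑ β ∈ C, c β * φ β x) p μ :=
  memLp_finsetSum C fun β _ => (hφ β).const_mul (c β)

theorem toLp_sum_mul (hφ : ∀ β, MemLp (φ β) p μ) (C : Finset ι) (c : ι → ℝ) :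
    (memLp_sum_mul hφ C c).toLp _ = ∑ β ∈ C, c β • (hφ β).toLp (φ β) := by
  induction C using Finset.induction_on with
  | empty => exact MemLp.toLp_zero _
  | insert b D hb ih =>
    simp only [Finset.sum_insert hb]
    rw [← ih, ← MemLp.toLp_const_smul, ← MemLp.toLp_add]
    rfl

end LinearCombination

theorem exists_integral_mul_sub_eq_zero_and_integral_sq_le {φ : ι → Ω → ℝ}
    (hφ : ∀ β, MemLp (φ β) 2 μ) (hf : MemLp f 2 μ) (C : Finset ι) :
    ∃ q : ι → ℝ, (∀ α ∈ C, ∫ x, φ α x * (f x - ∑ β ∈ C, q β * φ β x) ∂μ = 0) ∧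
      ∀ c : ι → ℝ, ∫ x, (f x - ∑ β ∈ C, q β * φ β x) ^ 2 ∂μ ≤
        ∫ x, (f x - ∑ β ∈ C, c β * φ β x) ^ 2 ∂μ := by
  obtain ⟨q, orthogonal, minimal⟩ := exists_inner_sub_sum_eq_zero_and_norm_le (𝕜 := ℝ) C
    (fun β => (hφ β).toLp (φ β)) (hf.toLp f)
  have memLp_residual (c : ι → ℝ) := hf.sub (memLp_sum_mul hφ C c)
  simp only [← toLp_sum_mul hφ, ← MemLp.toLp_sub] at orthogonal minimal
  refine ⟨q, fun α hα => ?_, fun c => ?_⟩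
  · exact (inner_toLp_toLp (hφ α) (memLp_residual q)).symm.trans (orthogonal α hα)
  · calc ∫ x, (f x - ∑ β ∈ C, q β * φ β x) ^ 2 ∂μ = ‖(memLp_residual q).toLp _‖ ^ 2 :=
          (norm_toLp_sq (memLp_residual q)).symm
      _ ≤ ‖(memLp_residual c).toLp _‖ ^ 2 := by
          gcongr
          exact minimal c
      _ = ∫ x, (f x - ∑ β ∈ C, c β * φ β x) ^ 2 ∂μ := norm_toLp_sq (memLp_residual c)

theorem integral_sq_le_sq_of_ae_abs_le [IsProbabilityMeasure μ] {B : ℝ}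
    (hf : ∀ᵐ x ∂μ, |f x| ≤ B) : ∫ x, f x ^ 2 ∂μ ≤ B ^ 2 := by
  have sq_le : (fun x => f x ^ 2) ≤ᵐ[μ] fun _ => B ^ 2 := by
    filter_upwards [hf] with x hx using sq_le_sq' (abs_le.1 hx).1 (abs_le.1 hx).2
  simpa using integral_mono_of_nonneg (ae_of_all μ fun x => sq_nonneg (f x))
    (integrable_const _) sq_le

end L2

theorem memLp_of_continuousOn_isCompact {X E : Type*} [TopologicalSpace X] [T2Space X]
    [MeasurableSpace X] [OpensMeasurableSpace X] [NormedAddCommGroup E]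
    {μ : Measure X} [IsFiniteMeasure μ] {K : Set X} (hK : IsCompact K) (hμ : ∀ᵐ x ∂μ, x ∈ K)
    {u : X → E} (hu : ContinuousOn u K) (p : ENNReal) : MemLp u p μ := by
  obtain ⟨B, hB⟩ := hK.exists_bound_of_continuousOn hu
  have meas : AEStronglyMeasurable u (μ.restrict K) :=
    hu.aestronglyMeasurable_of_isCompact hK hK.measurableSet
  rw [Measure.restrict_eq_self_of_ae_mem hμ] at meas
  exact .of_bound meas B (hμ.mono hB)

/-! ### Supports and monomials -/

theorem measSupport_eq_support (P : Measure ℝ) : measSupport P = P.support := by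
  ext x
  simp only [measSupport, Measure.mem_support_iff_forall, pos_iff_ne_zero, Set.mem_ofPred_eq]

theorem measSupport_subset_of_isClosed {P : Measure ℝ} {K : Set ℝ} (hK : IsClosed K)
    (hP : ∀ᵐ x ∂P, x ∈ K) : measSupport P ⊆ K :=
  measSupport_eq_support P ▸ Measure.support_subset_of_isClosed hK hP

theorem isClosed_measSupport (P : Measure ℝ) : IsClosed (measSupport P) :=
  measSupport_eq_support P ▸ Measure.isClosed_support

theorem ae_piP_mem_measSupport (P : Measure ℝ) [SigmaFinite P] (d : ℕ) :
    ∀ᵐ x ∂piP P d, ∀ i, x i ∈ measSupport P := by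
  have mem_support : ∀ᵐ t ∂P, t ∈ measSupport P :=
    measSupport_eq_support P ▸ Measure.support_mem_ae
  exact ae_all_iff.2 fun i => Measure.tendsto_eval_ae_ae.eventually mem_support

theorem continuous_monom {d : ℕ} (α : Fin d → ℕ) : Continuous (monom α) :=
  continuous_finsetProd _ fun i _ => (continuous_apply i).pow (α i)

theorem mem_multSet_iff {P : Measure ℝ} {d M : ℕ} {β : Fin d → ℕ} :
    β ∈ multSet P d M ↔ ∑ i, β i ≤ M ∧
      ((measSupport P).Finite → ∀ i, β i ≤ (measSupport P).ncard - 1) := by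
  have le_sum (i : Fin d) : β i ≤ ∑ i, β i :=
    Finset.single_le_sum (fun _ _ => Nat.zero_le _) (Finset.mem_univ i)
  rw [multSet, Finset.mem_filter, Fintype.mem_piFinset]
  simp only [omegaP, capM, Finset.mem_range, Nat.lt_succ_iff]
  split_ifs with hP
  · simp only [le_min_iff, hP, true_imp_iff]
    refine ⟨fun h => ⟨h.2.1, fun i => (h.1 i).1⟩,
      fun h => ⟨fun i => ⟨h.2 i, (le_sum i).trans h.1⟩, h.1, ?_⟩⟩
    simpa using Finset.sum_le_card_nsmul Finset.univ β _ fun i _ => h.2 i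
  · simpa only [hP, false_imp_iff, and_true, and_iff_right_iff_imp] using
      fun h i => (le_sum i).trans h

theorem exists_natDegree_le_ncard_sub_one_eqOn {R : Type*} [CommRing R] [Nontrivial R] {S : Set R}
    (hS : S.Finite) (f : R[X]) :
    ∃ p : R[X], p.natDegree ≤ f.natDegree ∧ p.natDegree ≤ S.ncard - 1 ∧
      S.EqOn p.eval f.eval := by
  let Q : R[X] := Lagrange.nodal hS.toFinset id
  have monic : Q.Monic := Lagrange.nodal_monic
  have natDegree_Q : Q.natDegree = S.ncard := by
    rw [Lagrange.natDegree_nodal, Set.ncard_eq_toFinset_card S hS]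
  refine ⟨f %ₘ Q, natDegree_modByMonic_le_left, ?_, fun x hx => ?_⟩
  · obtain hQ | hQ := eq_or_ne Q 1
    · simp [hQ]
    · exact Nat.le_sub_one_of_lt (natDegree_Q ▸ natDegree_modByMonic_lt f monic hQ)
  · have isRoot : Q.eval x = 0 :=
      Lagrange.eval_nodal_at_node (v := id) (hS.mem_toFinset.2 hx)
    simpa [isRoot] using congrArg (eval x) (modByMonic_add_div f Q)

theorem prod_eval_eq_sum_monom {d : ℕ} (p : Fin d → ℝ[X]) {C : Finset (Fin d → ℕ)}
    (hC : ∀ β, (∀ i, β i ≤ (p i).natDegree) → β ∈ C) (x : Fin d → ℝ) :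
    ∏ i, (p i).eval (x i) = ∑ β ∈ C, (∏ i, (p i).coeff (β i)) * monom β x := by
  have box_subset : Fintype.piFinset (fun i => Finset.range ((p i).natDegree + 1)) ⊆ C :=
    fun β hβ => hC β fun i =>
      Nat.lt_succ_iff.1 (Finset.mem_range.1 (Fintype.mem_piFinset.1 hβ i))
  simp only [eval_eq_sum_range, Finset.prod_univ_sum, Finset.prod_mul_distrib, monom]
  refine Finset.sum_subset box_subset fun β _ hβ => ?_
  obtain ⟨i, hi⟩ : ∃ i, (p i).natDegree < β i := by simpa [Nat.lt_succ_iff] using hβ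
  rw [Finset.prod_eq_zero (Finset.mem_univ i) (coeff_eq_zero_of_natDegree_lt hi), zero_mul]

theorem exists_monom_eq_sum_multSet (P : Measure ℝ) {d M : ℕ} {α : Fin d → ℕ}
    (hα : ∑ i, α i ≤ M) :
    ∃ c : (Fin d → ℕ) → ℝ, ∀ x : Fin d → ℝ, (∀ i, x i ∈ measSupport P) →
      monom α x = ∑ β ∈ multSet P d M, c β * monom β x := by
  have exists_reduced (k : ℕ) : ∃ p : ℝ[X], p.natDegree ≤ k ∧
      ((measSupport P).Finite → p.natDegree ≤ (measSupport P).ncard - 1) ∧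
      ∀ t ∈ measSupport P, p.eval t = t ^ k := by
    by_cases hP : (measSupport P).Finite
    · obtain ⟨p, hpk, hpP, hp⟩ := exists_natDegree_le_ncard_sub_one_eqOn hP (X ^ k)
      exact ⟨p, natDegree_X_pow (R := ℝ) k ▸ hpk, fun _ => hpP, fun t ht => by simp [hp ht]⟩
    · exact ⟨X ^ k, natDegree_X_pow_le k, fun h => absurd h hP, by simp⟩
  choose p hpk hpP hp using exists_reduced
  refine ⟨fun β => ∏ i, (p (α i)).coeff (β i), fun x hx => ?_⟩
  rw [← prod_eval_eq_sum_monom (fun i => p (α i)) _ x]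
  · exact Finset.prod_congr rfl fun i _ => (hp _ _ (hx i)).symm
  · exact fun β hβ => mem_multSet_iff.2
      ⟨(Finset.sum_le_sum fun i _ => (hβ i).trans (hpk _)).trans hα,
        fun hP i => (hβ i).trans (hpP _ hP)⟩

theorem exists_eval_eq_sum_multSet (P : Measure ℝ) {d M : ℕ} {G : MvPolynomial (Fin d) ℝ}
    (hG : G.totalDegree ≤ M) :
    ∃ c : (Fin d → ℕ) → ℝ, ∀ x : Fin d → ℝ, (∀ i, x i ∈ measSupport P) →
      MvPolynomial.eval x G = ∑ β ∈ multSet P d M, c β * monom β x := by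
  have degree_le (s : Fin d →₀ ℕ) (hs : s ∈ G.support) : ∑ i, s i ≤ M := by
    rw [← Finsupp.degree_eq_sum]
    exact (MvPolynomial.le_totalDegree hs).trans hG
  choose! c hc using fun s hs => exists_monom_eq_sum_multSet P (degree_le s hs)
  refine ⟨fun β => ∑ s ∈ G.support, G.coeff s * c s β, fun x hx => ?_⟩
  calc MvPolynomial.eval x G = ∑ s ∈ G.support, G.coeff s * monom s x := G.eval_eq' x
    _ = ∑ s ∈ G.support, G.coeff s * ∑ β ∈ multSet P d M, c s β * monom β x :=
        Finset.sum_congr rfl fun s hs => by rw [hc s hs x hx]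
    _ = ∑ β ∈ multSet P d M, (∑ s ∈ G.support, G.coeff s * c s β) * monom β x := by
        simp only [Finset.mul_sum, Finset.sum_mul, mul_assoc]
        exact Finset.sum_comm

/-! ### Polynomial approximation of networks -/

theorem totalDegree_aeval_le_natDegree_mul {ι R : Type*} [CommSemiring R] (p : R[X])
    (G : MvPolynomial ι R) : (aeval G p).totalDegree ≤ p.natDegree * G.totalDegree := by
  rw [aeval_eq_sum_range]
  refine MvPolynomial.totalDegree_finsetSum_le fun k hk => ?_
  calc (p.coeff k • G ^ k).totalDegree ≤ (G ^ k).totalDegree :=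
        MvPolynomial.totalDegree_smul_le _ _
    _ ≤ k * G.totalDegree := MvPolynomial.totalDegree_pow G k
    _ ≤ p.natDegree * G.totalDegree :=
        Nat.mul_le_mul_right _ (Nat.lt_succ_iff.1 (Finset.mem_range.1 hk))

theorem eval_aeval_eq_eval_eval {ι R : Type*} [CommSemiring R] (p : R[X])
    (G : MvPolynomial ι R) (x : ι → R) :
    MvPolynomial.eval x (aeval G p) = p.eval (MvPolynomial.eval x G) := by
  simp [aeval_eq_sum_range, eval_eq_sum_range, MvPolynomial.smul_eval]

theorem abs_sum_mul_le_of_sum_abs_le_one {ι R : Type*} [Fintype ι] [Ring R] [LinearOrder R]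
    [IsStrictOrderedRing R] {w v : ι → R} {B : R} (hw : ∑ i, |w i| ≤ 1) (hB : 0 ≤ B)
    (hv : ∀ i, |v i| ≤ B) : |∑ i, w i * v i| ≤ B :=
  calc |∑ i, w i * v i| ≤ ∑ i, |w i * v i| := Finset.abs_sum_le_sum_abs _ _
    _ ≤ ∑ i, |w i| * B := Finset.sum_le_sum fun i _ => by
        rw [abs_mul]
        exact mul_le_mul_of_nonneg_left (hv i) (abs_nonneg _)
    _ = (∑ i, |w i|) * B := (Finset.sum_mul ..).symm
    _ ≤ B := mul_le_of_le_one_left hB hw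

/-- `p` is a `δ`-approximation of the activation `σ` that can be substituted for it inside a
network: both preserve `[-1, 1]`, and `σ` does not amplify errors there. -/
structure IsActivationApprox (σ : ℝ → ℝ) (p : ℝ[X]) (δ : ℝ) : Prop where
  lipschitz : LipschitzOnWith 1 σ (Set.Icc (-1) 1)
  mapsTo : Set.MapsTo σ (Set.Icc (-1) 1) (Set.Icc (-1) 1)
  mapsTo_eval : Set.MapsTo p.eval (Set.Icc (-1) 1) (Set.Icc (-1) 1)
  abs_eval_sub_le : ∀ t ∈ Set.Icc (-1 : ℝ) 1, |p.eval t - σ t| ≤ δ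

theorem IsActivationApprox.nonneg {σ : ℝ → ℝ} {p : ℝ[X]} {δ : ℝ}
    (h : IsActivationApprox σ p δ) : 0 ≤ δ :=
  (abs_nonneg _).trans (h.abs_eval_sub_le 0 (by norm_num))

theorem AdmissibleActivation.exists_isActivationApprox {σ : ℝ → ℝ} (hσ : AdmissibleActivation σ)
    {δ : ℝ} (hδ : 0 < δ) :
    ∃ p : ℝ[X], p.natDegree = approxOrder σ δ ∧ IsActivationApprox σ p δ := by
  obtain ⟨-, exists_approx, lipschitz, abs_le_one⟩ := hσ
  obtain ⟨p, natDegree_p, approx, p_mem⟩ := exists_approx δ hδ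
  exact ⟨p, natDegree_p, lipschitz, fun t ht => abs_le.1 (abs_le_one t ht),
    fun t ht => Set.Icc_subset_Icc_left (by norm_num) (p_mem t ht), approx⟩

/-- On `K`, the function `u` is continuous with values in `[-1, 1]` and within `δ` of a polynomial
of total degree at most `N`. The polynomial is required to take values in `[-1, 1]` as well, so that
the approximant of an activation, controlled only there, can be applied to it. -/
structure UnitApproximable {ι : Type*} (K : Set (ι → ℝ)) (N : ℕ) (δ : ℝ) (u : (ι → ℝ) → ℝ) :
    Prop where
  continuousOn : ContinuousOn u K
  mapsTo : Set.MapsTo u K (Set.Icc (-1) 1)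
  exists_polynomial : ∃ G : MvPolynomial ι ℝ, G.totalDegree ≤ N ∧
    ∀ x ∈ K, MvPolynomial.eval x G ∈ Set.Icc (-1) 1 ∧ |MvPolynomial.eval x G - u x| ≤ δ

section UnitApproximable

variable {ι : Type*} {K : Set (ι → ℝ)} {N : ℕ} {δ η : ℝ} {σ : ℝ → ℝ} {p : ℝ[X]}

theorem unitApproximable_coord {i : ι} (hK : ∀ x ∈ K, x i ∈ Set.Icc (-1) 1) :
    UnitApproximable K 1 0 fun x => x i where
  continuousOn := (continuous_apply i).continuousOn
  mapsTo := hK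
  exists_polynomial := ⟨MvPolynomial.X i, (MvPolynomial.totalDegree_X i).le, fun x hx => by
    simpa using hK x hx⟩

theorem UnitApproximable.sum_mul {κ : Type*} [Fintype κ] (hδ : 0 ≤ δ) {w : κ → ℝ}
    (hw : ∑ k, |w k| ≤ 1) {u : κ → (ι → ℝ) → ℝ} (hu : ∀ k, UnitApproximable K N δ (u k)) :
    UnitApproximable K N δ fun x => ∑ k, w k * u k x where
  continuousOn :=
    continuousOn_finsetSum _ fun k _ => continuousOn_const.mul (hu k).continuousOn
  mapsTo x hx := abs_le.1 <|
    abs_sum_mul_le_of_sum_abs_le_one hw zero_le_one fun k => abs_le.2 ((hu k).mapsTo hx)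
  exists_polynomial := by
    choose G totalDegree_le hG using fun k => (hu k).exists_polynomial
    refine ⟨∑ k, w k • G k, MvPolynomial.totalDegree_finsetSum_le fun k _ =>
      (MvPolynomial.totalDegree_smul_le _ _).trans (totalDegree_le k), fun x hx => ?_⟩
    simp only [map_sum, MvPolynomial.smul_eval, ← Finset.sum_sub_distrib, ← mul_sub]
    exact ⟨abs_le.1 <| abs_sum_mul_le_of_sum_abs_le_one hw zero_le_one fun k =>
        abs_le.2 (hG k x hx).1,
      abs_sum_mul_le_of_sum_abs_le_one hw hδ fun k => (hG k x hx).2⟩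

theorem UnitApproximable.activation_comp (hσ : IsActivationApprox σ p η) {u : (ι → ℝ) → ℝ}
    (hu : UnitApproximable K N δ u) :
    UnitApproximable K (p.natDegree * N) (η + δ) fun x => σ (u x) where
  continuousOn := hσ.lipschitz.continuousOn.comp hu.continuousOn hu.mapsTo
  mapsTo := hσ.mapsTo.comp hu.mapsTo
  exists_polynomial := by
    obtain ⟨G, totalDegree_le, hG⟩ := hu.exists_polynomial
    refine ⟨aeval G p, (totalDegree_aeval_le_natDegree_mul p G).trans
      (Nat.mul_le_mul_left _ totalDegree_le), fun x hx => ?_⟩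
    obtain ⟨G_mem, abs_sub_le_δ⟩ := hG x hx
    rw [eval_aeval_eq_eval_eval]
    refine ⟨hσ.mapsTo_eval G_mem, (abs_sub_le _ (σ (MvPolynomial.eval x G)) _).trans ?_⟩
    have lipschitz : |σ (MvPolynomial.eval x G) - σ (u x)| ≤ |MvPolynomial.eval x G - u x| := by
      simpa [Real.dist_eq] using hσ.lipschitz.dist_le_mul _ G_mem _ (hu.mapsTo hx)
    exact add_le_add (hσ.abs_eval_sub_le _ G_mem) (lipschitz.trans abs_sub_le_δ)

variable {m n : ℕ}

theorem unitApproximable_applyLayer (hσ : IsActivationApprox σ p η) (hδ : 0 ≤ δ) {k : ℕ}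
    {W : Matrix (Fin m) (Fin k) ℝ} (hW : ∀ j, ∑ i, |W j i| ≤ 1) {v : (ι → ℝ) → Fin k → ℝ}
    (hv : ∀ i, UnitApproximable K N δ fun x => v x i) (j : Fin m) :
    UnitApproximable K (p.natDegree * N) (η + δ) fun x => applyLayer σ W (v x) j :=
  (UnitApproximable.sum_mul hδ (hW j) hv).activation_comp hσ

theorem unitApproximable_iterLayers (hσ : IsActivationApprox σ p η) (hδ : 0 ≤ δ)
    {Ws : Fin n → Matrix (Fin m) (Fin m) ℝ} (hWs : ∀ l j, ∑ i, |Ws l j i| ≤ 1)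
    {v : (ι → ℝ) → Fin m → ℝ} (hv : ∀ j, UnitApproximable K N δ fun x => v x j) (j : Fin m) :
    UnitApproximable K (p.natDegree ^ n * N) (n * η + δ)
      fun x => iterLayers σ n Ws (v x) j := by
  induction n generalizing j with
  | zero => simpa only [pow_zero, one_mul, Nat.cast_zero, zero_mul, zero_add, iterLayers] using hv j
  | succ n ih =>
    have error_nonneg : 0 ≤ n * η + δ := add_nonneg (mul_nonneg n.cast_nonneg hσ.nonneg) hδ
    have last_layer := unitApproximable_applyLayer hσ error_nonneg (hWs (Fin.last n))
      (ih fun l => hWs l.castSucc) j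
    have degree_eq : p.natDegree ^ (n + 1) * N = p.natDegree * (p.natDegree ^ n * N) := by ring
    have error_eq : (n + 1 : ℕ) * η + δ = η + (n * η + δ) := by push_cast; ring
    rw [degree_eq, error_eq]
    exact last_layer

theorem unitApproximable_nnFun {d : ℕ} {K : Set (Fin d → ℝ)}
    (hK : ∀ x ∈ K, ∀ i, x i ∈ Set.Icc (-1) 1)
    (hσ : IsActivationApprox σ p η) {a : Fin m → ℝ} (ha : ∑ j, |a j| ≤ 1)
    {W1 : Matrix (Fin m) (Fin d) ℝ} (hW1 : ∀ j, ∑ i, |W1 j i| ≤ 1)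
    {Ws : Fin n → Matrix (Fin m) (Fin m) ℝ} (hWs : ∀ l j, ∑ i, |Ws l j i| ≤ 1) :
    UnitApproximable K (p.natDegree ^ (n + 1)) ((n + 1 : ℕ) * η) (nnFun σ a W1 Ws) := by
  have first_layer (j : Fin m) :
      UnitApproximable K p.natDegree η fun x => applyLayer σ W1 x j := by
    simpa only [mul_one, add_zero] using unitApproximable_applyLayer hσ le_rfl hW1
      (fun i => unitApproximable_coord fun x hx => hK x hx i) j
  have error_nonneg : 0 ≤ n * η + η := add_nonneg (mul_nonneg n.cast_nonneg hσ.nonneg) hσ.nonneg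
  have output := UnitApproximable.sum_mul error_nonneg ha
    (unitApproximable_iterLayers hσ hσ.nonneg hWs first_layer)
  have error_eq : (n + 1 : ℕ) * η = n * η + η := by push_cast; ring
  rw [pow_succ, error_eq]
  exact output

end UnitApproximable

theorem mul_sqrt_div_sq_sq {c ε : ℝ} (hc : c ≠ 0) (hε : 0 ≤ ε) :
    (c * Real.sqrt (ε / c ^ 2)) ^ 2 = ε := by
  rw [mul_pow, Real.sq_sqrt (by positivity), mul_div_cancel₀ _ (pow_ne_zero 2 hc)]

theorem network_orthogonal_polynomial_approximation_general
    (P : Measure ℝ) (hP : measSupport P ⊆ Set.Icc (-1) 1)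
    {d m n : ℕ} (μ : Measure (Fin d → ℝ)) [IsProbabilityMeasure μ]
    (hμ : ∀ᵐ x ∂μ, ∀ i, x i ∈ measSupport P)
    {σ : ℝ → ℝ} {p : ℝ[X]} {δ : ℝ} (hσ : IsActivationApprox σ p δ)
    {a : Fin m → ℝ} (ha : ∑ j, |a j| ≤ 1)
    {W1 : Matrix (Fin m) (Fin d) ℝ} (hW1 : ∀ j, ∑ i, |W1 j i| ≤ 1)
    {Ws : Fin n → Matrix (Fin m) (Fin m) ℝ} (hWs : ∀ l j, ∑ i, |Ws l j i| ≤ 1)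
    {M : ℕ} (hM : p.natDegree ^ (n + 1) ≤ M) :
    ∃ q : (Fin d → ℕ) → ℝ,
      (∀ α ∈ multSet P d M,
        ∫ x, monom α x * (nnFun σ a W1 Ws x
            - ∑ β ∈ multSet P d M, q β * monom β x) ∂μ = 0) ∧
      ∫ x, (nnFun σ a W1 Ws x - ∑ β ∈ multSet P d M, q β * monom β x) ^ 2 ∂μ
        ≤ ((n + 1 : ℕ) * δ) ^ 2 := by
  let K : Set (Fin d → ℝ) := {x | ∀ i, x i ∈ measSupport P}
  have isCompact_K : IsCompact K :=
    isCompact_pi_infinite fun _ => isCompact_Icc.of_isClosed_subset (isClosed_measSupport P) hP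
  have approx := unitApproximable_nnFun (K := K) (fun x hx i => hP (hx i)) hσ ha hW1 hWs
  have memLp_monom (β : Fin d → ℕ) : MemLp (monom β) 2 μ :=
    memLp_of_continuousOn_isCompact isCompact_K hμ (continuous_monom β).continuousOn 2
  have memLp_nnFun : MemLp (nnFun σ a W1 Ws) 2 μ :=
    memLp_of_continuousOn_isCompact isCompact_K hμ approx.continuousOn 2
  obtain ⟨G, totalDegree_le, hG⟩ := approx.exists_polynomial
  obtain ⟨c, hc⟩ := exists_eval_eq_sum_multSet P (totalDegree_le.trans hM)
  obtain ⟨q, orthogonal, minimal⟩ :=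
    exists_integral_mul_sub_eq_zero_and_integral_sq_le memLp_monom memLp_nnFun (multSet P d M)
  refine ⟨q, orthogonal, (minimal c).trans (integral_sq_le_sq_of_ae_abs_le ?_)⟩
  filter_upwards [hμ] with x hx
  rw [← hc x hx, abs_sub_comm]
  exact (hG x hx).2

/-- Existence of an orthogonal, accurate polynomial approximant of a
network: for an admissible activation network with unit `ℓ1`-bounded weights and
`M = φ_σ(√(ε/L²))^L`, there is a polynomial supported on the `(d,M)`-multiplicities set
whose error is orthogonal to all those monomials and has mean square at most `ε`. -/
theorem network_orthogonal_polynomial_approximation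
    (P : Measure ℝ) (hP : AdmissibleDist P)
    (σ : ℝ → ℝ) (hσ : AdmissibleActivation σ)
    (d m L : ℕ) (hL : 1 ≤ L)
    (a : Fin m → ℝ) (W1 : Matrix (Fin m) (Fin d) ℝ)
    (Ws : Fin (L - 1) → Matrix (Fin m) (Fin m) ℝ)
    (ha : ∑ j, |a j| ≤ 1)
    (hW1 : ∀ j, ∑ i, |W1 j i| ≤ 1)
    (hWs : ∀ p j, ∑ i, |Ws p j i| ≤ 1)
    (ε : ℝ) (hε : 0 < ε)
    (M : ℕ) (hM : M = approxOrder σ (Real.sqrt (ε / (L : ℝ) ^ 2)) ^ L) :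
    ∃ q : (Fin d → ℕ) → ℝ,
      (∀ α ∈ multSet P d M,
        ∫ x, monom α x * (nnFun σ a W1 Ws x
            - ∑ β ∈ multSet P d M, q β * monom β x) ∂(piP P d) = 0) ∧
      ∫ x, (nnFun σ a W1 Ws x - ∑ β ∈ multSet P d M, q β * monom β x) ^ 2 ∂(piP P d)
        ≤ ε := by
  have : IsProbabilityMeasure P := hP.1
  obtain ⟨n, rfl⟩ := Nat.exists_eq_add_of_le' hL
  have measSupport_subset : measSupport P ⊆ Set.Icc (-1) 1 :=
    measSupport_subset_of_isClosed isClosed_Icc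
      ((mem_ae_iff_prob_eq_one measurableSet_Icc).2 hP.2.1)
  obtain ⟨p, natDegree_p, hp⟩ := hσ.exists_isActivationApprox
    (δ := Real.sqrt (ε / ((n + 1 : ℕ) : ℝ) ^ 2)) (by positivity)
  have : IsProbabilityMeasure (piP P d) := by unfold piP; infer_instance
  obtain ⟨q, orthogonal, error_le⟩ := network_orthogonal_polynomial_approximation_general (n := n) P
    measSupport_subset (piP P d) (ae_piP_mem_measSupport P d) hp ha hW1 hWs
    (hM.trans (natDegree_p ▸ rfl)).ge
  rw [mul_sqrt_div_sq_sq (by positivity) hε.le] at error_le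
  exact ⟨q, orthogonal, error_le⟩

end
end
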